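/- (Theorem 2, part for Condition (C2).) Let G be a directed acyclic graph on V = 𝐗 ∪ 𝐘, unidirectional from 𝐗 to 𝐘, and assume the graphical form of Condition (C2): there exist distinct Yk, Yl ∈ 𝐘 and S ⊆ 𝐘 \ {Yk, Yl} such that S does not d-separate Yk and Yl in G but S ∪ 𝐗 d-separates Yk and Yl in G. Then d(𝐘|𝐗) := edgeDens(G_{𝐘|𝐗}) − edgeDens(G_𝐘) < 0. -/

import Mathlib

open MeasureTheory ProbabilityTheory

namespace VecCI

variable {V : Type*}

/-- Undirected adjacency of the edge relation `E`. -/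
def Adj (E : V → V → Prop) (u v : V) : Prop := E u v ∨ E v u

/-- `p` is a path from `a` to `b`: a list of pairwise distinct vertices, starting at `a`,
ending at `b`, with at least two vertices, consecutive vertices being adjacent. -/
def IsPath (E : V → V → Prop) (p : List V) (a b : V) : Prop :=
  p.Nodup ∧ 2 ≤ p.length ∧ p.head? = some a ∧ p.getLast? = some b ∧ p.Chain' (Adj E)

/-- Index `i` is an interior position of the path `p`. -/
def Interior (p : List V) (i : ℕ) : Prop := 0 < i ∧ i + 1 < p.length

/-- The vertex at interior position `i` of `p` is a collider: both adjacent edges point into it. -/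
def ColliderAt (E : V → V → Prop) (p : List V) (i : ℕ) : Prop :=
  Interior p i ∧
    ∃ u v w, p[i - 1]? = some u ∧ p[i]? = some v ∧ p[i + 1]? = some w ∧ E u v ∧ E w v

/-- The vertex at interior position `i` of `p` is a non-collider. -/
def NonColliderAt (E : V → V → Prop) (p : List V) (i : ℕ) : Prop :=
  Interior p i ∧ ¬ ColliderAt E p i

/-- `d` is a descendant of `c`: `d = c` or there is a directed path from `c` to `d`. -/
def Descendant (E : V → V → Prop) (c d : V) : Prop := Relation.ReflTransGen E c d

/-- A set `S` blocks a path `p` if some interior non-collider of `p` lies in `S`, or some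
collider of `p` has no descendant in `S`. -/
def Blocked (E : V → V → Prop) (S : Set V) (p : List V) : Prop :=
  (∃ i v, NonColliderAt E p i ∧ p[i]? = some v ∧ v ∈ S) ∨
  (∃ i v, ColliderAt E p i ∧ p[i]? = some v ∧ ∀ d, Descendant E v d → d ∉ S)

/-- `S` d-separates `a` and `b`: every path between them is blocked by `S`. -/
def DSep (E : V → V → Prop) (S : Set V) (a b : V) : Prop :=
  ∀ p : List V, IsPath E p a b → Blocked E S p

/-- `E` admits no directed cycle. -/
def Acyclic (E : V → V → Prop) : Prop := ∀ v, ¬ Relation.TransGen E v v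

/-- `E` has no edge from `Ys` to `Xs`. -/
def Unidirectional (E : V → V → Prop) (Xs Ys : Set V) : Prop :=
  ∀ x ∈ Xs, ∀ y ∈ Ys, ¬ E y x


/-- The skeleton produced by an oracle PC algorithm run on the group `W`: the unordered
pair `{i, j}` of distinct vertices of `W` is an edge iff no `S ⊆ W \ {i, j}` d-separates
`i` and `j` in the full graph. -/
def EdgePlain (E : V → V → Prop) (W : Set V) : Set (Sym2 V) :=
  {e | ∃ i j : V, e = s(i, j) ∧ i ∈ W ∧ j ∈ W ∧ i ≠ j ∧
    ∀ S : Set V, S ⊆ W \ {i, j} → ¬ DSep E S i j}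

/-- The skeleton produced by an oracle PC algorithm run on the group `W` with the other
group `C` added to every conditioning set: `{i, j}` is an edge iff there is no
`S ⊆ W \ {i, j}` such that `S ∪ C` d-separates `i` and `j` in the full graph. -/
def EdgeCond (E : V → V → Prop) (W C : Set V) : Set (Sym2 V) :=
  {e | ∃ i j : V, e = s(i, j) ∧ i ∈ W ∧ j ∈ W ∧ i ≠ j ∧
    ∀ S : Set V, S ⊆ W \ {i, j} → ¬ DSep E (S ∪ C) i j}

/-- Edge density of an edge set `A` over a vertex group `W` with `n = |W|`:
`|A| / (n (n − 1) / 2)`. -/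
noncomputable def edgeDens (A : Set (Sym2 V)) (W : Set V) : ℝ :=
  (A.ncard : ℝ) / ((W.ncard : ℝ) * ((W.ncard : ℝ) - 1) / 2)

/-!
Moral graphs turn d-connection into connectivity: `a` and `b` are d-connected given `S` iff they
are joined by a path outside `S` in the moral graph of the ancestors of `{a, b} ∪ S`. Write `𝐘`
for the observed group and call the vertices of `𝐗 = 𝐘ᶜ` latent.

By the local Markov property, `G_{𝐘|𝐗}` is the graph of adjacent pairs of `𝐘`, so it is contained
in `G_𝐘`. If the two coincided, then every pair `{u, v} ⊆ 𝐘` that is connected through latent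
vertices among the ancestors of `{u, v}` would be adjacent. Removing sinks one at a time, one
deduces a version for all ancestral sets `B ⊆ 𝐘`: a pair connected through latent vertices among the
ancestors of `B` has a common child in `B` (a vertex counting as a child of itself). A moral path
outside `S` therefore survives when its latent segments are contracted, so that conditioning on `𝐗`
in addition to `S ⊆ 𝐘` cannot separate a d-connected pair. This contradicts (C2).
-/

section

open Relation

variable {E : V → V → Prop} {B C S T Ys : Set V} {a b c i j m u v w z : V} {p : List V}
  {d : Bool}

/-! ### Ancestors and moral graphs -/

/-- The ancestors of the elements of `B`, including the elements of `B` themselves. -/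
def ancestors (E : V → V → Prop) (B : Set V) : Set V := {v | ∃ b ∈ B, Descendant E v b}

lemma subset_ancestors : B ⊆ ancestors E B := fun b hb => ⟨b, hb, .refl⟩

lemma mem_ancestors_of_descendant (h : Descendant E u v) (hv : v ∈ ancestors E B) :
    u ∈ ancestors E B :=
  let ⟨b, hb, hvb⟩ := hv
  ⟨b, hb, h.trans hvb⟩

lemma ancestors_subset (h : B ⊆ ancestors E C) : ancestors E B ⊆ ancestors E C :=
  fun _ ⟨_, hb, hvb⟩ => mem_ancestors_of_descendant hvb (h hb)

/-- Adjacency in the moral graph of the ancestors of `B`, with loops added. Counting every vertex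
as a child of itself, this is the existence of a common child, and an edge `E u w` is the special
case where the common child is `w`. -/
def MoralAdj (E : V → V → Prop) (B : Set V) (u w : V) : Prop :=
  ∃ c ∈ ancestors E B, ReflGen E u c ∧ ReflGen E w c

/-- Connectedness by a path in the moral graph of the ancestors of `B` whose vertices, except
possibly for the first one, lie outside `S`. -/
def MoralConn (E : V → V → Prop) (B S : Set V) : V → V → Prop :=
  ReflTransGen fun u w => MoralAdj E B u w ∧ w ∉ S

namespace MoralAdj

lemma symm (h : MoralAdj E B u w) : MoralAdj E B w u :=
  let ⟨c, hc, huc, hwc⟩ := h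
  ⟨c, hc, hwc, huc⟩

lemma mono (hBC : B ⊆ ancestors E C) (h : MoralAdj E B u w) : MoralAdj E C u w :=
  let ⟨c, hc, huc, hwc⟩ := h
  ⟨c, ancestors_subset hBC hc, huc, hwc⟩

lemma right_mem (h : MoralAdj E B u w) : w ∈ ancestors E B :=
  let ⟨_, hc, _, hwc⟩ := h
  mem_ancestors_of_descendant hwc.to_reflTransGen hc

end MoralAdj

namespace MoralConn

lemma mono (hBC : B ⊆ ancestors E C) (hTS : T ⊆ S) (h : MoralConn E B S u w) :
    MoralConn E C T u w :=
  ReflTransGen.mono (fun _ _ ⟨hadj, hS⟩ => ⟨hadj.mono hBC, fun hT => hS (hTS hT)⟩) _ _ h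

lemma mem_ancestors (h : MoralConn E B S u w) (hu : u ∈ ancestors E B) : w ∈ ancestors E B := by
  rcases h.cases_tail with rfl | ⟨_, -, hadj, -⟩
  · exact hu
  · exact hadj.right_mem

lemma notMem (h : MoralConn E B S u w) (hu : u ∉ S) : w ∉ S := by
  rcases h.cases_tail with rfl | ⟨_, -, -, hw⟩
  · exact hu
  · exact hw

lemma symm (h : MoralConn E B S u w) (hu : u ∉ S) : MoralConn E B S w u := by
  induction h with
  | refl => exact .refl
  | tail huv hvw ih => exact .head ⟨hvw.1.symm, notMem huv hu⟩ ih

end MoralConn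

/-! ### Blocked paths -/

lemma colliderAt_cons_cons_cons_one :
    ColliderAt E (w :: v :: u :: p) 1 ↔ E w v ∧ E u v := by
  simp [ColliderAt, Interior]

lemma colliderAt_cons_add_two (n : ℕ) :
    ColliderAt E (w :: p) (n + 2) ↔ ColliderAt E p (n + 1) := by
  simp [ColliderAt, Interior]

lemma nonColliderAt_cons_add_two (n : ℕ) :
    NonColliderAt E (w :: p) (n + 2) ↔ NonColliderAt E p (n + 1) := by
  simp [NonColliderAt, colliderAt_cons_add_two, Interior]

lemma blocked_cons_cons_cons_iff :
    Blocked E S (w :: v :: u :: p) ↔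
      (¬ (E w v ∧ E u v) ∧ v ∈ S) ∨ ((E w v ∧ E u v) ∧ v ∉ ancestors E S) ∨
        Blocked E S (v :: u :: p) := by
  have exists_iff (P : List V → ℕ → Prop) (R : V → Prop) (h0 : ∀ q, ¬ P q 0)
      (hadd : ∀ x q n, P (x :: q) (n + 2) ↔ P q (n + 1)) (q : List V) :
      (∃ n x, P (w :: v :: q) n ∧ (w :: v :: q)[n]? = some x ∧ R x) ↔
        (P (w :: v :: q) 1 ∧ R v) ∨ ∃ n x, P (v :: q) n ∧ (v :: q)[n]? = some x ∧ R x := by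
    rw [← Nat.or_exists_add_one, ← Nat.or_exists_add_one,
      ← Nat.or_exists_add_one (p := fun n => ∃ x, P (v :: q) n ∧ _)]
    simp [h0, hadd]
  have hncol : NonColliderAt E (w :: v :: u :: p) 1 ↔ ¬ (E w v ∧ E u v) := by
    rw [NonColliderAt, colliderAt_cons_cons_cons_one, and_iff_right]
    simp [Interior]
  have hv : (∀ x, Descendant E v x → x ∉ S) ↔ v ∉ ancestors E S := by
    simp [ancestors, imp_not_comm]
  rw [Blocked, exists_iff (NonColliderAt E) _ (fun _ h => lt_irrefl 0 h.1.1)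
      fun _ _ => nonColliderAt_cons_add_two,
    exists_iff (ColliderAt E) _ (fun _ h => lt_irrefl 0 h.1.1) fun _ _ => colliderAt_cons_add_two,
    hncol, colliderAt_cons_cons_cons_one, hv, or_assoc, or_left_comm (a := ∃ _, _)]
  rfl

lemma not_blocked_of_length_le_two (hp : p.length ≤ 2) : ¬ Blocked E S p := by
  have not_interior (i : ℕ) : ¬ Interior p i := fun ⟨_, _⟩ => by omega
  rintro (⟨i, -, hi, -⟩ | ⟨i, -, hi, -⟩) <;> exact not_interior i hi.1

/-! ### Active walks -/

/-- The condition on `v` under which an active walk ending at `v` may be continued against an edge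
into `v`. The flag `d` tells whether the walk arrives at `v` along an edge into `v`, in which case
`v` becomes a collider. -/
def CanAscend (E : V → V → Prop) (S : Set V) (v : V) : Bool → Prop
  | true => v ∈ ancestors E S
  | false => v ∉ S

/-- `ActiveWalk E S b v p d`: the reverse of the list `v :: p` is a walk from `b` to `v`, possibly
with repeated vertices, that is not blocked by `S`. The flag `d` tells whether its last edge points
into `v`. -/
inductive ActiveWalk (E : V → V → Prop) (S : Set V) (b : V) : V → List V → Bool → Prop
  | start : ActiveWalk E S b b [] false
  | descend {v w : V} {p : List V} {d : Bool} : ActiveWalk E S b v p d → v ∉ S →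
      E v w → ActiveWalk E S b w (v :: p) true
  | ascend {v w : V} {p : List V} {d : Bool} : ActiveWalk E S b v p d → CanAscend E S v d →
      E w v → ActiveWalk E S b w (v :: p) false

namespace ActiveWalk

lemma edge_into (h : ActiveWalk E S b v (u :: p) true) : E u v := by
  cases h; assumption

lemma edge_out (h : ActiveWalk E S b v (u :: p) false) : E v u := by
  cases h; assumption

lemma getLast? (h : ActiveWalk E S b v p d) : (v :: p).getLast? = some b := by
  induction h with
  | start => rfl
  | descend _ _ _ ih => rwa [List.getLast?_cons_cons]
  | ascend _ _ _ ih => rwa [List.getLast?_cons_cons]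

lemma isChain (h : ActiveWalk E S b v p d) : (v :: p).IsChain (Adj E) := by
  induction h with
  | start => exact .singleton _
  | descend _ _ hvw ih => exact ih.cons_cons (.inr hvw)
  | ascend _ _ hwv ih => exact ih.cons_cons (.inl hwv)

lemma not_blocked [Std.Asymm E] (h : ActiveWalk E S b v p d) : ¬ Blocked E S (v :: p) := by
  induction h with
  | start => exact not_blocked_of_length_le_two (by simp)
  | @descend v w p d hv hvS hvw ih =>
    rcases p with _ | ⟨u, p⟩
    · exact not_blocked_of_length_le_two (by simp)
    · rw [blocked_cons_cons_cons_iff]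
      rintro (⟨-, hS⟩ | ⟨⟨hwv, -⟩, -⟩ | hblocked)
      exacts [hvS hS, Std.Asymm.asymm _ _ hvw hwv, ih hblocked]
  | @ascend v w p d hv hasc hwv ih =>
    rcases p with _ | ⟨u, p⟩
    · exact not_blocked_of_length_le_two (by simp)
    · rw [blocked_cons_cons_cons_iff]
      cases d with
      | true =>
        rintro (⟨hncol, -⟩ | ⟨-, hS⟩ | hblocked)
        exacts [hncol ⟨hwv, hv.edge_into⟩, hS hasc, ih hblocked]
      | false =>
        rintro (⟨-, hS⟩ | ⟨⟨-, huv⟩, -⟩ | hblocked)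
        exacts [hasc hS, Std.Asymm.asymm _ _ hv.edge_out huv, ih hblocked]

lemma exists_of_not_blocked [Std.Asymm E] (hb : b ∉ S) (hlast : (v :: p).getLast? = some b)
    (hchain : (v :: p).IsChain (Adj E)) (hp : ¬ Blocked E S (v :: p)) :
    ∃ d, ActiveWalk E S b v p d := by
  induction p generalizing v with
  | nil =>
    obtain rfl : v = b := by simpa using hlast
    exact ⟨false, .start⟩
  | cons u p ih =>
    rw [List.getLast?_cons_cons] at hlast
    rw [List.isChain_cons_cons] at hchain
    rcases p with _ | ⟨t, p⟩
    · obtain rfl : u = b := by simpa using hlast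
      rcases hchain.1 with hvu | huv
      exacts [⟨false, .ascend .start hb hvu⟩, ⟨true, .descend .start hb huv⟩]
    · rw [blocked_cons_cons_cons_iff] at hp
      push Not at hp
      obtain ⟨hncol, hcol, hp⟩ := hp
      obtain ⟨d, hu⟩ := ih hlast hchain.2 hp
      rcases hchain.1 with hvu | huv
      · refine ⟨false, .ascend hu ?_ hvu⟩
        cases d with
        | true => exact hcol ⟨hvu, hu.edge_into⟩
        | false => exact hncol fun _ => Std.Asymm.asymm _ _ hu.edge_out
      · exact ⟨true, .descend hu (hncol fun hvu => absurd hvu (Std.Asymm.asymm _ _ huv)) huv⟩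

/-- The alternative in the conclusion is the case where the walk descends all the way from `w` to
its end `v`. -/
lemma exists_suffix_of_mem (h : ActiveWalk E S b v p d) (hw : w ∈ p) :
    ∃ q e, ActiveWalk E S b w q e ∧ (w :: q) <:+ p ∧
      (CanAscend E S w e ∨ e = true ∧ d = true ∧ Descendant E w v) := by
  induction h with
  | start => simp at hw
  | @descend v x p d hv hvS hvx ih =>
    rcases List.mem_cons.1 hw with rfl | hw
    · refine ⟨p, d, hv, List.suffix_rfl, ?_⟩
      cases d with
      | true => exact .inr ⟨rfl, rfl, .single hvx⟩
      | false => exact .inl hvS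
    · obtain ⟨q, e, hq, hsuf, hasc | ⟨he, -, hwv⟩⟩ := ih hw
      · exact ⟨q, e, hq, hsuf.trans (List.suffix_cons _ _), .inl hasc⟩
      · exact ⟨q, e, hq, hsuf.trans (List.suffix_cons _ _), .inr ⟨he, rfl, hwv.tail hvx⟩⟩
  | @ascend v x p d hv hasc hxv ih =>
    rcases List.mem_cons.1 hw with rfl | hw
    · exact ⟨p, d, hv, List.suffix_rfl, .inl hasc⟩
    · obtain ⟨q, e, hq, hsuf, hasc' | ⟨rfl, rfl, hwv⟩⟩ := ih hw
      · exact ⟨q, e, hq, hsuf.trans (List.suffix_cons _ _), .inl hasc'⟩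
      · exact ⟨q, true, hq, hsuf.trans (List.suffix_cons _ _),
          .inl (mem_ancestors_of_descendant hwv hasc)⟩

/-- Loop erasure: when cutting out a loop at `w` turns `w` into a collider, the loop left `w` along
a directed path to a collider that is an ancestor of `S`, or to the end of the walk. -/
lemma exists_nodup [Std.Irrefl E] (h : ActiveWalk E S b v p d) :
    ∃ q e, ActiveWalk E S b v q e ∧ (v :: q).Nodup ∧ (CanAscend E S v d → CanAscend E S v e) := by
  induction h with
  | start => exact ⟨[], false, .start, List.nodup_singleton b, id⟩
  | @descend v w p d _ hvS hvw ih =>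
    obtain ⟨q, e, hq, hnodup, -⟩ := ih
    by_cases hw : w ∈ v :: q
    · have hwq : w ∈ q := (List.mem_cons.1 hw).resolve_left (by rintro rfl; exact irrefl _ hvw)
      obtain ⟨q', e', hq', hsuf, hasc⟩ := hq.exists_suffix_of_mem hwq
      refine ⟨q', e', hq', hsuf.sublist.nodup hnodup.of_cons, fun hw => ?_⟩
      rcases hasc with hasc | ⟨rfl, -⟩
      exacts [hasc, hw]
    · exact ⟨v :: q, true, .descend hq hvS hvw, List.nodup_cons.2 ⟨hw, hnodup⟩, id⟩
  | @ascend v w p d _ hasc hwv ih =>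
    obtain ⟨q, e, hq, hnodup, hasc'⟩ := ih
    by_cases hw : w ∈ v :: q
    · have hwq : w ∈ q := (List.mem_cons.1 hw).resolve_left (by rintro rfl; exact irrefl _ hwv)
      obtain ⟨q', e', hq', hsuf, hasc''⟩ := hq.exists_suffix_of_mem hwq
      refine ⟨q', e', hq', hsuf.sublist.nodup hnodup.of_cons, fun _ => ?_⟩
      rcases hasc'' with hasc'' | ⟨rfl, rfl, -⟩
      exacts [hasc'', mem_ancestors_of_descendant (.single hwv) (hasc' hasc)]
    · exact ⟨v :: q, false, .ascend hq (hasc' hasc) hwv, List.nodup_cons.2 ⟨hw, hnodup⟩, id⟩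

end ActiveWalk

theorem not_dSep_iff_exists_activeWalk [Std.Asymm E] (hab : a ≠ b) (hb : b ∉ S) :
    ¬ DSep E S a b ↔ ∃ p d, ActiveWalk E S b a p d := by
  constructor
  · intro h
    simp only [DSep, not_forall] at h
    obtain ⟨p, ⟨-, -, hhead, hlast, hchain⟩, hp⟩ := h
    obtain ⟨p, rfl⟩ : ∃ q, p = a :: q := List.head?_eq_some_iff.1 hhead
    exact ⟨p, ActiveWalk.exists_of_not_blocked hb hlast hchain hp⟩
  · rintro ⟨p, d, h⟩ hsep
    obtain ⟨q, e, hq, hnodup, -⟩ := h.exists_nodup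
    have hlen : 2 ≤ (a :: q).length := by
      rcases q with _ | ⟨u, q⟩
      · exact absurd (by simpa using hq.getLast?) hab
      · simp
    exact hq.not_blocked (hsep _ ⟨hnodup, hlen, rfl, hq.getLast?, hq.isChain⟩)

/-! ### The moral graph criterion -/

namespace ActiveWalk

lemma exists_moralConn (h : ActiveWalk E S b v p d) (hb : b ∈ ancestors E B)
    (hS : S ⊆ ancestors E B) (hv : d = true → v ∈ ancestors E B) :
    ∃ u, MoralConn E B S b u ∧ MoralAdj E B u v ∧ (d = true → E u v) := by
  induction h with
  | start => exact ⟨b, .refl, ⟨b, hb, .refl, .refl⟩, nofun⟩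
  | @descend v w _ d _ hvS hvw ih =>
    have hw : w ∈ ancestors E B := hv rfl
    obtain ⟨u, hbu, huv, -⟩ := ih fun _ => mem_ancestors_of_descendant (.single hvw) hw
    exact ⟨v, hbu.tail ⟨huv, hvS⟩, ⟨w, hw, .single hvw, .refl⟩, fun _ => hvw⟩
  | @ascend v w p d _ hasc hwv ih =>
    cases d with
    | true =>
      have hvB : v ∈ ancestors E B := ancestors_subset hS hasc
      obtain ⟨u, hbu, -, huv⟩ := ih fun _ => hvB
      exact ⟨u, hbu, ⟨v, hvB, .single (huv rfl), .single hwv⟩, nofun⟩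
    | false =>
      obtain ⟨u, hbu, huv, -⟩ := ih nofun
      exact ⟨v, hbu.tail ⟨huv, hasc⟩, ⟨v, huv.right_mem, .refl, .single hwv⟩, nofun⟩

lemma moralConn (h : ActiveWalk E S b a p d) (ha : a ∉ S) :
    MoralConn E ({a, b} ∪ S) S b a := by
  obtain ⟨u, hbu, hua, -⟩ := h.exists_moralConn (B := {a, b} ∪ S) (subset_ancestors (by simp))
    (Set.subset_union_right.trans subset_ancestors) fun _ => subset_ancestors (by simp)
  exact hbu.tail ⟨hua, ha⟩

lemma exists_extend (hva : Descendant E v a) (hv : v ∉ ancestors E S)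
    (h : ActiveWalk E S b v p d) : ∃ q e, ActiveWalk E S b a q e := by
  induction hva using ReflTransGen.head_induction_on generalizing p d with
  | refl => exact ⟨p, d, h⟩
  | head hvw _ ih =>
    exact ih (fun hw => hv (mem_ancestors_of_descendant (.single hvw) hw))
      (h.descend (fun hvS => hv (subset_ancestors hvS)) hvw)

lemma exists_of_descendant (hvb : Descendant E v b) (hv : v ∉ ancestors E S) :
    ∃ q, ActiveWalk E S b v q false := by
  induction hvb using ReflTransGen.head_induction_on with
  | refl => exact ⟨[], .start⟩
  | @head v w hvw _ ih =>
    have hw : w ∉ ancestors E S := fun hw => hv (mem_ancestors_of_descendant (.single hvw) hw)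
    obtain ⟨q, hq⟩ := ih hw
    exact ⟨w :: q, hq.ascend (fun hwS => hw (subset_ancestors hwS)) hvw⟩

lemma exists_canAscend (h : ActiveWalk E S b c p true)
    (hc : c ∈ ancestors E ({a, b} ∪ S)) :
    (∃ q e, ActiveWalk E S b a q e) ∨ ∃ q e, ActiveWalk E S b c q e ∧ CanAscend E S c e := by
  by_cases hcS : c ∈ ancestors E S
  · exact .inr ⟨p, true, h, hcS⟩
  · obtain ⟨x, (rfl | rfl) | hx, hcx⟩ := hc
    · exact .inl (h.exists_extend hcx hcS)
    · obtain ⟨q, hq⟩ := exists_of_descendant hcx hcS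
      exact .inr ⟨q, false, hq, fun hS => hcS (subset_ancestors hS)⟩
    · exact absurd ⟨x, hx, hcx⟩ hcS

lemma exists_of_moralConn (hb : b ∉ S) (h : MoralConn E ({a, b} ∪ S) S b w) :
    (∃ p d, ActiveWalk E S b a p d) ∨ ∃ p d, ActiveWalk E S b w p d ∧ CanAscend E S w d := by
  induction h with
  | refl => exact .inr ⟨[], false, .start, hb⟩
  | @tail u w hbu huw ih =>
    refine ih.elim .inl fun ⟨p, d, hu, hasc⟩ => ?_
    obtain ⟨⟨c, hc, huc, hwc⟩, hwS⟩ := huw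
    have hc' : (∃ q e, ActiveWalk E S b a q e) ∨
        ∃ q e, ActiveWalk E S b c q e ∧ CanAscend E S c e := by
      cases huc with
      | refl => exact .inr ⟨p, d, hu, hasc⟩
      | single huc => exact (hu.descend (MoralConn.notMem hbu hb) huc).exists_canAscend hc
    refine hc'.imp_right fun ⟨q, e, hq, hasc⟩ => ?_
    cases hwc with
    | refl => exact ⟨q, e, hq, hasc⟩
    | single hwc => exact ⟨c :: q, false, hq.ascend hasc hwc, hwS⟩

end ActiveWalk

theorem not_dSep_iff_moralConn [Std.Asymm E] (hab : a ≠ b) (ha : a ∉ S) (hb : b ∉ S) :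
    ¬ DSep E S a b ↔ MoralConn E ({a, b} ∪ S) S a b := by
  rw [not_dSep_iff_exists_activeWalk hab hb]
  constructor
  · rintro ⟨p, d, h⟩
    exact (h.moralConn ha).symm hb
  · intro h
    rcases ActiveWalk.exists_of_moralConn hb (h.symm ha) with h | ⟨p, d, h, -⟩
    exacts [h, ⟨p, d, h⟩]

lemma DSep.symm [Std.Asymm E] (h : DSep E S a b) (hab : a ≠ b) (ha : a ∉ S) (hb : b ∉ S) :
    DSep E S b a := by
  contrapose! h
  rw [not_dSep_iff_moralConn hab.symm hb ha] at h
  rw [not_dSep_iff_moralConn hab ha hb, Set.pair_comm]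
  exact h.symm hb

lemma not_dSep_of_adj (hij : i ≠ j) (h : Adj E i j) : ¬ DSep E S i j := fun hsep =>
  not_blocked_of_length_le_two (p := [i, j]) le_rfl
    (hsep [i, j] ⟨by simpa using hij, le_rfl, rfl, rfl, .cons_cons h (.singleton j)⟩)

/-! ### Separation by parents -/

lemma Acyclic.asymm (hacyc : Acyclic E) : Std.Asymm E :=
  ⟨fun u _ huv hvu => hacyc u (.tail (.single huv) hvu)⟩

lemma Unidirectional.mem (huni : Unidirectional E Ysᶜ Ys) (hu : u ∈ Ys) (huw : E u w) : w ∈ Ys :=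
  not_not.1 fun hw => huni w hw u hu huw

lemma Unidirectional.mem_of_descendant (huni : Unidirectional E Ysᶜ Ys) (hu : u ∈ Ys)
    (huw : Descendant E u w) : w ∈ Ys := by
  induction huw with
  | refl => exact hu
  | tail _ hvw ih => exact huni.mem ih hvw

theorem dSep_of_parents_subset [Std.Asymm E] (hij : i ≠ j) (hi : i ∉ S) (hj : j ∉ S)
    (hparents : ∀ v, E v i → v ∈ S) (hchildren : ∀ c, E i c → c ∉ ancestors E ({i, j} ∪ S)) :
    DSep E S i j := by
  have eq_of_moralConn {w : V} (h : MoralConn E ({i, j} ∪ S) S i w) : w = i := by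
    induction h with
    | refl => rfl
    | tail _ hvw ih =>
      subst ih
      obtain ⟨⟨c, hc, hvc, hwc⟩, hw⟩ := hvw
      cases hvc with
      | single hvc => exact absurd hc (hchildren c hvc)
      | refl =>
        cases hwc with
        | refl => rfl
        | single hwv => exact absurd (hparents _ hwv) hw
  by_contra h
  exact hij.symm (eq_of_moralConn ((not_dSep_iff_moralConn hij hi hj).1 h))

lemma dSep_parents_union_compl (hacyc : Acyclic E) (huni : Unidirectional E Ysᶜ Ys) (hi : i ∈ Ys)
    (hj : j ∈ Ys) (hij : i ≠ j) (hji : ¬ E j i) (hdesc : ¬ Descendant E i j) :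
    DSep E ({v ∈ Ys | E v i} ∪ Ysᶜ) i j := by
  have := hacyc.asymm
  refine dSep_of_parents_subset hij (by simp [hi, irrefl]) (by simp [hj, hji]) (fun v hv => ?_) ?_
  · exact (em (v ∈ Ys)).imp (⟨·, hv⟩) id
  · rintro c hic ⟨x, (rfl | rfl) | ⟨-, hxi⟩ | hx, hcx⟩
    · exact hacyc _ (.head' hic hcx)
    · exact hdesc (.head hic hcx)
    · exact hacyc _ (.head' hic (hcx.tail hxi))
    · exact hx (huni.mem_of_descendant (huni.mem hi hic) hcx)

lemma exists_dSep_union_compl (hacyc : Acyclic E) (huni : Unidirectional E Ysᶜ Ys) (hi : i ∈ Ys)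
    (hj : j ∈ Ys) (hij : i ≠ j) (hadj : ¬ Adj E i j) :
    ∃ S ⊆ Ys \ {i, j}, DSep E (S ∪ Ysᶜ) i j := by
  have := hacyc.asymm
  have hij' : ¬ E i j := fun h => hadj (.inl h)
  have hji' : ¬ E j i := fun h => hadj (.inr h)
  by_cases hdesc : Descendant E i j
  · have hdesc' : ¬ Descendant E j i := fun h => by
      rcases reflTransGen_iff_eq_or_transGen.1 hdesc with rfl | hdesc
      exacts [hij rfl, hacyc i (hdesc.trans_left h)]
    refine ⟨{v ∈ Ys | E v j}, fun v hv => ⟨hv.1, ?_⟩, ?_⟩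
    · rintro (rfl | rfl)
      exacts [hij' hv.2, irrefl _ hv.2]
    · exact (dSep_parents_union_compl hacyc huni hj hi hij.symm hij' hdesc').symm hij.symm
        (by simp [hj, irrefl]) (by simp [hi, hij'])
  · refine ⟨{v ∈ Ys | E v i}, fun v hv => ⟨hv.1, ?_⟩,
      dSep_parents_union_compl hacyc huni hi hj hij hji' hdesc⟩
    rintro (rfl | rfl)
    exacts [irrefl _ hv.2, hji' hv.2]

theorem mem_edgeCond_compl_iff (hacyc : Acyclic E) (huni : Unidirectional E Ysᶜ Ys) (hi : i ∈ Ys)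
    (hj : j ∈ Ys) (hij : i ≠ j) : s(i, j) ∈ EdgeCond E Ys Ysᶜ ↔ Adj E i j := by
  constructor
  · rintro ⟨k, l, heq, hk, hl, hkl, h⟩
    have hadj : Adj E k l := by
      by_contra hadj
      obtain ⟨S, hS, hsep⟩ := exists_dSep_union_compl hacyc huni hk hl hkl hadj
      exact h S hS hsep
    rcases Sym2.eq_iff.1 heq with ⟨rfl, rfl⟩ | ⟨rfl, rfl⟩
    exacts [hadj, hadj.symm]
  · exact fun hadj => ⟨i, j, rfl, hi, hj, hij, fun S _ => not_dSep_of_adj hij hadj⟩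

theorem edgeCond_compl_subset_edgePlain (hacyc : Acyclic E) (huni : Unidirectional E Ysᶜ Ys) :
    EdgeCond E Ys Ysᶜ ⊆ EdgePlain E Ys := by
  rintro _ ⟨i, j, rfl, hi, hj, hij, h⟩
  have hadj := (mem_edgeCond_compl_iff hacyc huni hi hj hij).1 ⟨i, j, rfl, hi, hj, hij, h⟩
  exact ⟨i, j, rfl, hi, hj, hij, fun S _ => not_dSep_of_adj hij hadj⟩

/-! ### Connection through latent vertices -/

/-- Connectedness by a path in the moral graph of the ancestors of `B` whose interior vertices are
latent, that is, outside `Ys`. -/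
def LatentConn (E : V → V → Prop) (B Ys : Set V) (u v : V) : Prop :=
  ∃ z, MoralConn E B Ys u z ∧ MoralAdj E B z v

/-- `LatentDescendant E Ys c g`: there is a directed path from `c` to `g` whose vertices, except
possibly for `g`, are latent, that is, outside `Ys`. -/
def LatentDescendant (E : V → V → Prop) (Ys : Set V) : V → V → Prop :=
  ReflTransGen fun x y => x ∉ Ys ∧ E x y

/-- Every pair of vertices of `Ys` that is connected through latent vertices among its own
ancestors, equivalently by an inducing path relative to `Ysᶜ`, is adjacent. -/
def InducingAdj (E : V → V → Prop) (Ys : Set V) : Prop :=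
  ∀ u ∈ Ys, ∀ v ∈ Ys, u ≠ v → LatentConn E {u, v} Ys u v → Adj E u v

lemma LatentDescendant.descendant (h : LatentDescendant E Ys c w) : Descendant E c w :=
  ReflTransGen.mono (fun _ _ => And.right) _ _ h

lemma exists_latentDescendant (hB : ancestors E B ∩ Ys = B) (hc : c ∈ ancestors E B) :
    ∃ g ∈ B, LatentDescendant E Ys c g := by
  obtain ⟨b, hb, hcb⟩ := hc
  induction hcb using ReflTransGen.head_induction_on with
  | refl => exact ⟨b, hb, .refl⟩
  | @head c d hcd hdb ih =>
    by_cases hc : c ∈ Ys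
    · exact ⟨c, hB.subset ⟨⟨b, hb, .head hcd hdb⟩, hc⟩, .refl⟩
    · obtain ⟨g, hg, hdg⟩ := ih
      exact ⟨g, hg, .head ⟨hc, hcd⟩ hdg⟩

namespace LatentConn

lemma mono (hBC : B ⊆ ancestors E C) (h : LatentConn E B Ys u v) : LatentConn E C Ys u v :=
  let ⟨z, huz, hzv⟩ := h
  ⟨z, huz.mono hBC Set.Subset.rfl, hzv.mono hBC⟩

lemma symm (h : LatentConn E B Ys u v) : LatentConn E B Ys v u := by
  obtain ⟨z, huz, hzv⟩ := h
  induction huz generalizing v with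
  | refl => exact ⟨v, .refl, hzv.symm⟩
  | tail _ hxz ih =>
    obtain ⟨y, hzy, hyu⟩ := ih hxz.1
    exact ⟨y, .head ⟨hzv.symm, hxz.2⟩ hzy, hyu⟩

lemma trans_latentDescendant (h : LatentConn E B Ys u c) (hcw : LatentDescendant E Ys c w)
    (hw : w ∈ ancestors E B) : LatentConn E B Ys u w := by
  induction hcw using ReflTransGen.head_induction_on with
  | refl => exact h
  | @head c d hcd hdw ih =>
    obtain ⟨z, huz, hzc⟩ := h
    have hd : d ∈ ancestors E B :=
      mem_ancestors_of_descendant (LatentDescendant.descendant hdw) hw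
    exact ih ⟨c, huz.tail ⟨hzc, hcd.1⟩, d, hd, .single hcd.2, .refl⟩

lemma of_common_child_mem
    (hC : ∀ z c, MoralConn E C Ys u z → ReflGen E z c → c ∈ ancestors E B → c ∈ ancestors E C)
    (h : LatentConn E B Ys u v) : LatentConn E C Ys u v := by
  obtain ⟨z, huz, c, hc, hzc, hvc⟩ := h
  have hz : MoralConn E C Ys u z := by
    clear hzc
    induction huz with
    | refl => exact .refl
    | tail _ hxz ih =>
      obtain ⟨⟨d, hd, hxd, hzd⟩, hz⟩ := hxz
      exact ih.tail ⟨⟨d, hC _ d ih hxd hd, hxd, hzd⟩, hz⟩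
  exact ⟨z, hz, c, hC z c hz hzc hc, hzc, hvc⟩

/-- The path is diverted to `m` at its first common child that is not an ancestor of `B \ {m}`. -/
lemma sdiff_singleton_or (hB : ancestors E B ∩ Ys = B) (h : LatentConn E B Ys u v) (m : V) :
    LatentConn E (B \ {m}) Ys u v ∨ LatentConn E B Ys u m := by
  by_contra! hnot
  refine hnot.1 (h.of_common_child_mem fun z c huz hzc hc => ?_)
  obtain ⟨g, hg, hcg⟩ := exists_latentDescendant hB hc
  have huc : LatentConn E B Ys u c :=
    ⟨z, huz.mono (Set.sdiff_subset.trans subset_ancestors) Set.Subset.rfl, c, hc, hzc, .refl⟩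
  have hug : LatentConn E B Ys u g := huc.trans_latentDescendant hcg (subset_ancestors hg)
  have hgm : g ≠ m := by
    rintro rfl
    exact hnot.2 hug
  exact ⟨g, ⟨hg, hgm⟩, hcg.descendant⟩

end LatentConn

/-! ### Ancestral sets without inducing paths -/

lemma Acyclic.exists_sink (hacyc : Acyclic E) (hfin : B.Finite) (hB : B.Nonempty) :
    ∃ m ∈ B, ∀ c ∈ B, ¬ E m c := by
  obtain ⟨b, hb⟩ := hB
  have : IsTrans V fun x y => TransGen E y x := ⟨fun _ _ _ hxy hyz => hyz.trans hxy⟩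
  have : Std.Irrefl fun x y => TransGen E y x := ⟨hacyc⟩
  have : IsStrictOrder V fun x y => TransGen E y x := {}
  obtain ⟨⟨m, hm⟩, -, hmin⟩ :=
    (hfin.wellFoundedOn (r := fun x y => TransGen E y x)).has_min Set.univ ⟨⟨b, hb⟩, trivial⟩
  exact ⟨m, hm, fun c hc hmc => hmin ⟨c, hc⟩ trivial (.single hmc)⟩

lemma ancestors_ancestors_inter_inter (E : V → V → Prop) (B Ys : Set V) :
    ancestors E (ancestors E B ∩ Ys) ∩ Ys = ancestors E B ∩ Ys :=
  Set.Subset.antisymm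
    (Set.inter_subset_inter_left _ (ancestors_subset Set.inter_subset_left))
    (Set.subset_inter subset_ancestors Set.inter_subset_right)

lemma ancestors_sdiff_singleton_inter (huni : Unidirectional E Ysᶜ Ys)
    (hB : ancestors E B ∩ Ys = B) (hm : m ∈ B) (hsink : ∀ c ∈ B, ¬ E m c) :
    ancestors E (B \ {m}) ∩ Ys = B \ {m} := by
  have hBY : B ⊆ Ys := hB.superset.trans Set.inter_subset_right
  refine Set.Subset.antisymm ?_
    (Set.subset_inter subset_ancestors (Set.sdiff_subset.trans hBY))
  rintro x ⟨⟨b, hb, hxb⟩, hx⟩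
  refine ⟨hB.subset ⟨⟨b, hb.1, hxb⟩, hx⟩, ?_⟩
  rintro rfl
  rcases hxb.cases_head with rfl | ⟨c, hxc, hcb⟩
  · exact hb.2 rfl
  · exact hsink c (hB.subset ⟨⟨b, hb.1, hcb⟩, huni.mem hx hxc⟩) hxc

namespace InducingAdj

lemma reflGen_of_sink (hind : InducingAdj E Ys) (hB : ancestors E B ∩ Ys = B) (hm : m ∈ B)
    (hsink : ∀ c ∈ B, ¬ E m c) (hv : v ∈ B) (h : LatentConn E B Ys m v) : ReflGen E v m := by
  have hBY : B ⊆ Ys := hB.superset.trans Set.inter_subset_right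
  have reflGen_of_pair {g : V} (hg : g ∈ B) (hmg : LatentConn E {m, g} Ys m g) :
      ReflGen E g m := by
    rcases eq_or_ne m g with rfl | hne
    · exact .refl
    · exact .single ((hind m (hBY hm) g (hBY hg) hne hmg).resolve_left (hsink g hg))
  have hpair (g : V) : ({m} : Set V) ⊆ ancestors E {m, g} :=
    (Set.singleton_subset_iff.2 (Set.mem_insert _ _)).trans subset_ancestors
  have hmv : LatentConn E {m} Ys m v := by
    refine h.of_common_child_mem fun z c hmz hzc hc => ?_
    obtain ⟨g, hg, hcg⟩ := exists_latentDescendant hB hc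
    have hg' : g ∈ ancestors E {m, g} := subset_ancestors (by simp)
    have hmc : LatentConn E {m, g} Ys m c :=
      ⟨z, hmz.mono (hpair g) Set.Subset.rfl, c,
        mem_ancestors_of_descendant hcg.descendant hg', hzc, .refl⟩
    have hgm := reflGen_of_pair hg (hmc.trans_latentDescendant hcg hg')
    exact ⟨m, rfl, hcg.descendant.trans hgm.to_reflTransGen⟩
  exact reflGen_of_pair hv (hmv.mono (hpair v))

theorem exists_common_child (hind : InducingAdj E Ys) (hacyc : Acyclic E)
    (huni : Unidirectional E Ysᶜ Ys) (hfin : B.Finite) (hB : ancestors E B ∩ Ys = B) (hu : u ∈ B)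
    (hv : v ∈ B) (h : LatentConn E B Ys u v) : ∃ c ∈ B, ReflGen E u c ∧ ReflGen E v c := by
  induction hn : B.ncard using Nat.strong_induction_on generalizing B u v with
  | h n ih =>
    subst hn
    obtain ⟨m, hm, hsink⟩ := hacyc.exists_sink hfin ⟨u, hu⟩
    have edge_to_sink {w : V} (hw : w ∈ B) (hmw : LatentConn E B Ys m w) : ReflGen E w m :=
      hind.reflGen_of_sink hB hm hsink hw hmw
    by_cases hum : u = m
    · subst hum
      exact ⟨u, hu, .refl, edge_to_sink hv h⟩
    by_cases hvm : v = m
    · subst hvm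
      exact ⟨v, hv, edge_to_sink hu h.symm, .refl⟩
    have smaller {x y : V} (hx : x ∈ B \ {m}) (hy : y ∈ B \ {m})
        (hxy : LatentConn E (B \ {m}) Ys x y) : ∃ c ∈ B, ReflGen E x c ∧ ReflGen E y c :=
      have ⟨c, hc, hxyc⟩ := ih _ (Set.ncard_sdiff_singleton_lt_of_mem hm hfin) hfin.sdiff
        (ancestors_sdiff_singleton_inter huni hB hm hsink) hx hy hxy rfl
      ⟨c, hc.1, hxyc⟩
    rcases h.sdiff_singleton_or hB m with huv | hum'
    · exact smaller ⟨hu, hum⟩ ⟨hv, hvm⟩ huv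
    rcases h.symm.sdiff_singleton_or hB m with hvu | hvm'
    · exact smaller ⟨hu, hum⟩ ⟨hv, hvm⟩ hvu.symm
    · exact ⟨m, hm, edge_to_sink hu hum'.symm, edge_to_sink hv hvm'.symm⟩

/-- The path from `v` to `w` is the last latent segment, which has not been contracted yet. -/
lemma exists_moralConn_union_compl (hind : InducingAdj E Ys) (hacyc : Acyclic E)
    (huni : Unidirectional E Ysᶜ Ys) (hfin : Ys.Finite) (hBY : B ⊆ Ys) (hu : u ∈ B)
    (h : MoralConn E B S u w) :
    ∃ v ∈ Ys, MoralConn E B (S ∪ Ysᶜ) u v ∧ MoralConn E B Ys v w := by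
  induction h with
  | refl => exact ⟨u, hBY hu, .refl, .refl⟩
  | @tail z w _ hzw ih =>
    obtain ⟨v, hv, huv, hvz⟩ := ih
    by_cases hw : w ∈ Ys
    · have hBA : B ⊆ ancestors E B ∩ Ys := Set.subset_inter subset_ancestors hBY
      have hvw : LatentConn E (ancestors E B ∩ Ys) Ys v w :=
        LatentConn.mono (hBA.trans subset_ancestors) ⟨z, hvz, hzw.1⟩
      obtain ⟨c, hc, hvc, hwc⟩ := hind.exists_common_child hacyc huni
        (hfin.subset Set.inter_subset_right) (ancestors_ancestors_inter_inter E B Ys)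
        ⟨huv.mem_ancestors (subset_ancestors hu), hv⟩ ⟨hzw.1.right_mem, hw⟩ hvw
      exact ⟨w, hw, huv.tail ⟨⟨c, hc.1, hvc, hwc⟩, by simp [hzw.2, hw]⟩, .refl⟩
    · exact ⟨v, hv, huv, hvz.tail ⟨hzw.1, hw⟩⟩

theorem not_dSep_union_compl (hind : InducingAdj E Ys) (hacyc : Acyclic E)
    (huni : Unidirectional E Ysᶜ Ys) (hfin : Ys.Finite) (hi : i ∈ Ys) (hj : j ∈ Ys) (hij : i ≠ j)
    (hS : S ⊆ Ys \ {i, j}) (h : ¬ DSep E S i j) : ¬ DSep E (S ∪ Ysᶜ) i j := by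
  have := hacyc.asymm
  have hiS : i ∉ S := fun hi => (hS hi).2 (by simp)
  have hjS : j ∉ S := fun hj => (hS hj).2 (by simp)
  rw [not_dSep_iff_moralConn hij hiS hjS] at h
  rw [not_dSep_iff_moralConn hij (by simp [hiS, hi]) (by simp [hjS, hj])]
  have hsub : {i, j} ∪ S ⊆ Ys :=
    Set.union_subset (Set.pair_subset hi hj) (hS.trans Set.sdiff_subset)
  obtain ⟨v, -, hiv, hvj⟩ := hind.exists_moralConn_union_compl hacyc huni hfin hsub (by simp) h
  obtain rfl : v = j := by
    rcases hvj.cases_tail with hjv | ⟨_, -, -, hj'⟩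
    exacts [hjv.symm, absurd hj hj']
  exact hiv.mono ((Set.union_subset_union_right _ Set.subset_union_left).trans subset_ancestors)
    Set.Subset.rfl

end InducingAdj

/-! ### Comparison of the skeletons -/

lemma LatentConn.mem_edgePlain [Std.Asymm E] (hi : i ∈ Ys) (hj : j ∈ Ys) (hij : i ≠ j)
    (h : LatentConn E {i, j} Ys i j) : s(i, j) ∈ EdgePlain E Ys := by
  refine ⟨i, j, rfl, hi, hj, hij, fun S hS => ?_⟩
  have hiS : i ∉ S := fun hi => (hS hi).2 (by simp)
  have hjS : j ∉ S := fun hj => (hS hj).2 (by simp)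
  have hsub : {i, j} ⊆ ancestors E ({i, j} ∪ S) := Set.subset_union_left.trans subset_ancestors
  obtain ⟨z, hiz, hzj⟩ := h
  rw [not_dSep_iff_moralConn hij hiS hjS]
  exact (hiz.mono hsub (hS.trans Set.sdiff_subset)).tail ⟨hzj.mono hsub, hjS⟩

theorem inducingAdj_of_edgePlain_subset (hacyc : Acyclic E) (huni : Unidirectional E Ysᶜ Ys)
    (h : EdgePlain E Ys ⊆ EdgeCond E Ys Ysᶜ) : InducingAdj E Ys :=
  have := hacyc.asymm
  fun _ hu _ hv huv hconn =>
    (mem_edgeCond_compl_iff hacyc huni hu hv huv).1 (h (hconn.mem_edgePlain hu hv huv))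

theorem edgeCond_compl_ssubset_edgePlain (hacyc : Acyclic E)
    (huni : Unidirectional E Ysᶜ Ys) (hfin : Ys.Finite) (hi : i ∈ Ys) (hj : j ∈ Ys) (hij : i ≠ j)
    (hS : S ⊆ Ys \ {i, j}) (hnsep : ¬ DSep E S i j) (hsep : DSep E (S ∪ Ysᶜ) i j) :
    EdgeCond E Ys Ysᶜ ⊂ EdgePlain E Ys :=
  ⟨edgeCond_compl_subset_edgePlain hacyc huni, fun hsub =>
    (inducingAdj_of_edgePlain_subset hacyc huni hsub).not_dSep_union_compl hacyc huni hfin hi hj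
      hij hS hnsep hsep⟩

lemma edgePlain_finite (hfin : Ys.Finite) : (EdgePlain E Ys).Finite :=
  ((hfin.prod hfin).image fun x => s(x.1, x.2)).subset fun _ ⟨i, j, he, hi, hj, _⟩ =>
    ⟨(i, j), ⟨hi, hj⟩, he.symm⟩

lemma edgeDens_lt_edgeDens {A A' : Set (Sym2 V)} (hA' : A'.Finite) (hYs : 1 < Ys.ncard)
    (h : A ⊂ A') : edgeDens A Ys < edgeDens A' Ys := by
  have hcard : (1 : ℝ) < Ys.ncard := mod_cast hYs
  have hpairs : (0 : ℝ) < Ys.ncard * (Ys.ncard - 1) / 2 := by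
    have : (0 : ℝ) < Ys.ncard - 1 := sub_pos.2 hcard
    positivity
  exact div_lt_div_of_pos_right (mod_cast Set.ncard_lt_ncard h hA') hpairs

theorem stmt_15_general {Xs : Set V} (hcover : Xs ∪ Ys = Set.univ) (hdisj : Disjoint Xs Ys)
    (hfin : Ys.Finite) (hacyc : Acyclic E) (huni : Unidirectional E Xs Ys) (hi : i ∈ Ys)
    (hj : j ∈ Ys) (hij : i ≠ j) (hS : S ⊆ Ys \ {i, j}) (hnsep : ¬ DSep E S i j)
    (hsep : DSep E (S ∪ Xs) i j) :
    edgeDens (EdgeCond E Ys Xs) Ys - edgeDens (EdgePlain E Ys) Ys < 0 := by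
  obtain rfl : Xs = Ysᶜ := IsCompl.eq_compl ⟨hdisj, codisjoint_iff.2 hcover⟩
  have hcard : 1 < Ys.ncard := (Set.one_lt_ncard hfin).2 ⟨i, hi, j, hj, hij⟩
  have hssub : EdgeCond E Ys Ysᶜ ⊂ EdgePlain E Ys :=
    edgeCond_compl_ssubset_edgePlain hacyc huni hfin hi hj hij hS hnsep hsep
  exact sub_neg.2 (edgeDens_lt_edgeDens (edgePlain_finite hfin) hcard hssub)

end

/-- Theorem 2, part for Condition (C2): under the graphical form of (C2),
`d(Y|X) = edgeDens(G_{Y|X}) − edgeDens(G_Y) < 0`. -/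
theorem stmt_15 {V : Type*} [Fintype V] (E : V → V → Prop) (Xs Ys : Set V)
    (hcover : Xs ∪ Ys = Set.univ) (hdisj : Disjoint Xs Ys)
    (hXne : Xs.Nonempty) (hYne : Ys.Nonempty)
    (hirr : Irreflexive E) (hacyc : Acyclic E)
    (huni : Unidirectional E Xs Ys)
    (Yk Yl : V) (hYk : Yk ∈ Ys) (hYl : Yl ∈ Ys) (hne : Yk ≠ Yl)
    (S : Set V) (hS : S ⊆ Ys \ {Yk, Yl})
    (hnsep : ¬ DSep E S Yk Yl) (hsep : DSep E (S ∪ Xs) Yk Yl) :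
    edgeDens (EdgeCond E Ys Xs) Ys - edgeDens (EdgePlain E Ys) Ys < 0 := by
  exact stmt_15_general hcover hdisj Ys.toFinite hacyc huni hYk hYl hne hS hnsep hsep

end VecCI
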